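/- arXiv:2105.07247 — 2 statements merged into one kernel-verified Lean document; each statement's English description precedes it below -/
import Mathlib

section
/- Let G be a finite group and N a normal subgroup such that G/N is cyclic, generated by the coset of q ∈ G. Then for an irreducible complex character ρ of G the following are equivalent: (a) ρ is not identically zero on qN; (b) the stabilizer of ρ in Q̂ under the tensoring action is trivial; (c) the restriction of ρ to N is an irreducible character of N. -/
open scoped BigOperators

/-- `ρ : G → ℂ` is the character of an irreducible (simple) finite-dimensional
complex representation of `G`. -/
def IsIrrChar (G : Type) [Group G] (ρ : G → ℂ) : Prop :=
  ∃ V : FDRep ℂ G, CategoryTheory.Simple V ∧ ρ = V.character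

/-- `Θ : G → ℂ` is the character of some finite-dimensional complex representation of `G`. -/
def IsChar (G : Type) [Group G] (Θ : G → ℂ) : Prop :=
  ∃ V : FDRep ℂ G, Θ = V.character

variable {G : Type} [Group G]

/-- The action of a character `χ ∈ Q̂` (where `Q = G ⧸ N`) on a function `ρ : G → ℂ`:
`(χ · ρ)(g) = χ(gN) · ρ(g)`. -/
def charMul (N : Subgroup G) [N.Normal] (χ : (G ⧸ N) →* ℂˣ) (ρ : G → ℂ) : G → ℂ :=
  fun g => (χ (g : G ⧸ N) : ℂ) * ρ g

/-- The orbit of `ρ` under the tensoring action of `Q̂ = Hom(G ⧸ N, ℂˣ)`. -/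
def qhatOrbit (N : Subgroup G) [N.Normal] (ρ : G → ℂ) : Set (G → ℂ) :=
  {ρ' | ∃ χ : (G ⧸ N) →* ℂˣ, ρ' = charMul N χ ρ}

/-- The coset `qN`, as a subset of `G`. -/
def coset (N : Subgroup G) [N.Normal] (q : G) : Set G :=
  {g | (g : G ⧸ N) = (q : G ⧸ N)}

/-- `C_q`: the set of conjugacy classes of `G` contained in the coset `qN`. -/
def Cset (N : Subgroup G) [N.Normal] (q : G) : Set (ConjClasses G) :=
  {c | c.carrier ⊆ coset N q}

/-- `R_q`: the set of `Q̂`-orbits on the irreducible characters of `G`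
containing a character not identically zero on `qN`. -/
def Rset (N : Subgroup G) [N.Normal] (q : G) : Set (Set (G → ℂ)) :=
  {S | (∃ ρ, IsIrrChar G ρ ∧ S = qhatOrbit N ρ) ∧ ∃ ρ' ∈ S, ∃ g ∈ coset N q, ρ' g ≠ 0}

/-- The class function `π_x` for `x ∈ Q = G ⧸ N`:
`π_x(g) = (1/#Q̂) ∑_{χ ∈ Q̂} conj(χ(x)) χ(gN)`. -/
noncomputable def piQ (N : Subgroup G) [N.Normal] (x : G ⧸ N) : G → ℂ :=
  fun g => (Nat.card ((G ⧸ N) →* ℂˣ) : ℂ)⁻¹ *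
    ∑ᶠ χ : (G ⧸ N) →* ℂˣ, (starRingEnd ℂ) (χ x : ℂ) * (χ (g : G ⧸ N) : ℂ)

/-- The space of class functions on `G`, as a submodule of `G → ℂ`. -/
noncomputable def classFunSubmodule (G : Type) [Group G] : Submodule ℂ (G → ℂ) where
  carrier := {f | ∀ g h : G, f (h * g * h⁻¹) = f g}
  add_mem' := by intro a b ha hb g h; simp only [Pi.add_apply, ha g h, hb g h]
  zero_mem' := by intro g h; rfl
  smul_mem' := by intro c f hf g h; simp only [Pi.smul_apply, hf g h]

/-- The space of class functions on `G` vanishing outside the coset `qN`. -/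
noncomputable def cosetClassFun (N : Subgroup G) [N.Normal] (q : G) : Submodule ℂ (G → ℂ) where
  carrier := {f | (∀ g h : G, f (h * g * h⁻¹) = f g) ∧ ∀ g, g ∉ coset N q → f g = 0}
  add_mem' := by
    intro a b ha hb
    exact ⟨fun g h => by simp only [Pi.add_apply, ha.1 g h, hb.1 g h],
      fun g hg => by simp only [Pi.add_apply, ha.2 g hg, hb.2 g hg, add_zero]⟩
  zero_mem' := ⟨fun g h => rfl, fun g hg => rfl⟩
  smul_mem' := by
    intro c f hf
    exact ⟨fun g h => by simp only [Pi.smul_apply, hf.1 g h],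
      fun g hg => by simp only [Pi.smul_apply, hf.2 g hg, smul_zero]⟩

/-!
For an irreducible character `ρ`, let `F x` be the sum of `ρ g * ρ g⁻¹` over the coset `x` of `N`.
Tensoring with a linear character preserves irreducibility, so by orthogonality the Fourier
transform of `F` on `Q = G ⧸ N` is `|G|` times the indicator function of the stabilizer of `ρ`.
Fourier inversion then gives `F x = |N| ∑ χ(x)⁻¹`, the sum running over the stabilizer.

At `x = 1` this says that the norm of `Res_N ρ` is the order of the stabilizer, so one is `1`
exactly when the other is. If the stabilizer is trivial then `F x = |N| ≠ 0` for every `x`, so `ρ`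
vanishes on no coset. Conversely, a linear character fixing `ρ` is `1` wherever `ρ` does not vanish;
if that happens somewhere on a coset generating `Q`, the character is trivial.
-/

universe u

open CategoryTheory MonoidalCategory

section FourierInversion

variable {Q R : Type*} [CommGroup Q] [Finite Q] [CommRing R] [IsDomain R]
  [HasEnoughRootsOfUnity R (Monoid.exponent Q)] [Fintype (Q →* Rˣ)] [DecidableEq Q]

theorem sum_monoidHom_units_apply (x : Q) :
    ∑ χ : Q →* Rˣ, (χ x : R) = if x = 1 then (Nat.card Q : R) else 0 := by
  split_ifs with hx
  · simp [hx, ← CommGroup.card_monoidHom_of_hasEnoughRootsOfUnity Q R]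
  · obtain ⟨χ, hχ⟩ := CommGroup.exists_apply_ne_one_of_hasEnoughRootsOfUnity Q R hx
    refine sum_hom_units_eq_zero ((Units.coeHom R).comp (MonoidHom.eval x)) fun h => hχ ?_
    exact Units.ext (DFunLike.congr_fun h χ)

theorem sum_monoidHom_units_apply_inv_mul_sum {α : Type*} [Fintype α] (π : α → Q) (f : α → R)
    (x : Q) :
    ∑ χ : Q →* Rˣ, (χ x⁻¹ : R) * ∑ a, (χ (π a) : R) * f a =
      Nat.card Q * ∑ a with π a = x, f a := by
  calc ∑ χ : Q →* Rˣ, (χ x⁻¹ : R) * ∑ a, (χ (π a) : R) * f a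
      = ∑ a, (∑ χ : Q →* Rˣ, (χ (x⁻¹ * π a) : R)) * f a := by
        simp only [Finset.mul_sum, Finset.sum_mul, map_mul, Units.val_mul, mul_assoc]
        exact Finset.sum_comm
    _ = Nat.card Q * ∑ a with π a = x, f a := by
        simp only [sum_monoidHom_units_apply, inv_mul_eq_one, ite_mul, zero_mul, Finset.mul_sum,
          Finset.sum_filter, mul_ite, mul_zero, eq_comm (a := x)]

end FourierInversion

section TwistStabilizer

variable {G R : Type*} [Group G] [CommRing R] (N : Subgroup G) [N.Normal]

/-- The stabilizer of a function `f : G → R` in the group of linear characters of `G ⧸ N`, acting on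
functions by `(χ · f) g = χ (gN) * f g`. For `f` a complex character this is the stabilizer
of `f` in `Q̂`. -/
def twistStabilizer (f : G → R) : Subgroup ((G ⧸ N) →* Rˣ) where
  carrier := {χ | ∀ g : G, (χ g : R) * f g = f g}
  one_mem' g := by simp
  mul_mem' {χ ψ} hχ hψ g := by
    rw [MonoidHom.mul_apply, Units.val_mul, mul_assoc, hψ g, hχ g]
  inv_mem' {χ} hχ g := by
    rw [MonoidHom.inv_apply, Units.inv_mul_eq_iff_eq_mul, hχ g]

variable {N}

theorem mem_twistStabilizer {f : G → R} {χ : (G ⧸ N) →* Rˣ} :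
    χ ∈ twistStabilizer N f ↔ ∀ g : G, (χ g : R) * f g = f g :=
  Iff.rfl

theorem twistStabilizer_eq_bot_of_apply_ne_zero [IsDomain R] {g : G}
    (hgen : ∀ x : G ⧸ N, x ∈ Subgroup.zpowers (g : G ⧸ N)) {f : G → R} (hg : f g ≠ 0) :
    twistStabilizer N f = ⊥ := by
  refine (Subgroup.eq_bot_iff_forall _).2 fun χ hχ => ?_
  have hχg : χ g = 1 := Units.ext ((mul_eq_right₀ hg).1 (hχ g))
  refine DFunLike.ext _ _ fun x => ?_
  obtain ⟨m, rfl⟩ := hgen x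
  simp [hχg]

end TwistStabilizer

section LinearRep

variable {k G : Type*} [Field k] [Monoid G]

/-- The one-dimensional representation on `k` in which `g` acts as multiplication by `χ g`;
tensoring with it twists a representation by `χ`. -/
noncomputable def linearRep (χ : G →* kˣ) : FDRep k G :=
  FDRep.of ((Algebra.lmul k k : k →* Module.End k k).comp ((Units.coeHom k).comp χ))

theorem linearRep_character (χ : G →* kˣ) (g : G) : (linearRep χ).character g = χ g :=
  Algebra.trace_self_apply (χ g : k)

end LinearRep

section Twist

variable {k G : Type u} [Field k] [IsAlgClosed k] [CharZero k] [Group G]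

theorem simple_linearRep_tensor [Finite G] (χ : G →* kˣ) (V : FDRep k G) [Simple V] :
    Simple (linearRep χ ⊗ V) := by
  have := Fintype.ofFinite G
  rw [FDRep.simple_iff_char_is_norm_one, ← V.simple_iff_char_is_norm_one.1 inferInstance]
  refine Finset.sum_congr rfl fun g _ => ?_
  simp only [FDRep.char_tensor, Pi.mul_apply, linearRep_character, map_inv]
  rw [mul_mul_mul_comm, Units.mul_inv, one_mul]

theorem sum_apply_mul_character_mul_character_inv_eq_zero [Fintype G] {χ : G →* kˣ}
    {V : FDRep k G} [Simple V] (hχ : ∃ g : G, (χ g : k) * V.character g ≠ V.character g) :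
    ∑ g : G, (χ g : k) * (V.character g * V.character g⁻¹) = 0 := by
  have hcard : (Nat.card G : k) ≠ 0 := NeZero.ne _
  have := invertibleOfNonzero hcard
  have := simple_linearRep_tensor χ V
  have hiso : ¬ Nonempty (linearRep χ ⊗ V ≅ V) := by
    rintro ⟨i⟩
    obtain ⟨g, hg⟩ := hχ
    exact hg (by simpa [linearRep_character] using congrFun (FDRep.char_iso i) g)
  have horth := FDRep.char_orthonormal (linearRep χ ⊗ V) V
  rw [if_neg hiso, mul_eq_zero_iff_left (inv_ne_zero hcard)] at horth
  simpa [linearRep_character, mul_assoc] using horth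

end Twist

section Restrict

variable {k G : Type*} [Field k] [Group G]

/-- The restriction `Res_N V` of a representation of `G` to a subgroup `N`. -/
noncomputable def restrict (N : Subgroup G) (V : FDRep k G) : FDRep k N :=
  FDRep.of (V.ρ.comp N.subtype)

theorem restrict_character (N : Subgroup G) (V : FDRep k G) (n : N) :
    (restrict N V).character n = V.character n :=
  rfl

end Restrict

section NormalSubgroup

variable {k G : Type u} [Field k] [IsAlgClosed k] [CharZero k] [Group G] {N : Subgroup G}
  [N.Normal] {V : FDRep k G} [Simple V]

open Classical in
theorem sum_quotient_apply_mul_character_mul_character_inv [Fintype G] (χ : (G ⧸ N) →* kˣ) :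
    ∑ g : G, (χ g : k) * (V.character g * V.character g⁻¹) =
      if χ ∈ twistStabilizer N V.character then (Nat.card G : k) else 0 := by
  split_ifs with hχ
  · rw [← V.simple_iff_char_is_norm_one.1 inferInstance]
    exact Finset.sum_congr rfl fun g _ => by rw [← mul_assoc, hχ g]
  · rw [mem_twistStabilizer, not_forall] at hχ
    exact sum_apply_mul_character_mul_character_inv_eq_zero (χ := χ.comp (QuotientGroup.mk' N)) hχ

open scoped IsMulCommutative

variable [IsMulCommutative (G ⧸ N)]

open Classical in
theorem sum_coset_character_mul_character_inv [Fintype G]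
    [Fintype (twistStabilizer N V.character)] (x : G ⧸ N) :
    ∑ g with ((g : G) : G ⧸ N) = x, V.character g * V.character g⁻¹ =
      Nat.card N * ∑ χ : twistStabilizer N V.character, (χ.1 x⁻¹ : k) := by
  have := Fintype.ofFinite ((G ⧸ N) →* kˣ)
  have hcard : (Nat.card G : k) = Nat.card (G ⧸ N) * Nat.card N := by
    exact_mod_cast N.card_eq_card_quotient_mul_card_subgroup
  refine mul_left_cancel₀ (NeZero.ne (Nat.card (G ⧸ N) : k)) ?_
  rw [← sum_monoidHom_units_apply_inv_mul_sum, ← mul_assoc, ← hcard, mul_comm]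
  simp only [sum_quotient_apply_mul_character_mul_character_inv, mul_ite, mul_zero]
  rw [← Finset.sum_filter, ← Finset.sum_mul]
  congr 1
  exact Finset.sum_subtype _ (by simp) _

theorem sum_restrict_character_mul_character_inv [Finite G] [Fintype N] :
    ∑ n : N, (restrict N V).character n * (restrict N V).character n⁻¹ =
      Nat.card N * Nat.card (twistStabilizer N V.character) := by
  classical
  have := Fintype.ofFinite G
  have := Fintype.ofFinite (twistStabilizer N V.character)
  have h := sum_coset_character_mul_character_inv (V := V) (1 : G ⧸ N)
  simp only [inv_one, map_one, Units.val_one, Finset.sum_const, Finset.card_univ, nsmul_eq_mul,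
    mul_one, QuotientGroup.eq_one_iff] at h
  rw [Nat.card_eq_fintype_card (α := twistStabilizer N V.character), ← h]
  simp only [restrict_character, Subgroup.coe_inv]
  exact (Finset.sum_subtype {g | g ∈ N} (by simp) fun g => V.character g * V.character g⁻¹).symm

theorem simple_restrict_iff_twistStabilizer_eq_bot [Finite G] :
    Simple (restrict N V) ↔ twistStabilizer N V.character = ⊥ := by
  have := Fintype.ofFinite N
  rw [FDRep.simple_iff_char_is_norm_one, sum_restrict_character_mul_character_inv,
    mul_eq_left₀ (NeZero.ne _), Nat.cast_eq_one, Subgroup.card_eq_one]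

theorem exists_coset_character_ne_zero_of_twistStabilizer_eq_bot [Finite G]
    (h : twistStabilizer N V.character = ⊥) (x : G ⧸ N) :
    ∃ g : G, (g : G ⧸ N) = x ∧ V.character g ≠ 0 := by
  classical
  have := Fintype.ofFinite G
  have : Unique (twistStabilizer N V.character) := by
    rw [h]
    infer_instance
  have hsum := sum_coset_character_mul_character_inv (V := V) x
  rw [Fintype.sum_unique] at hsum
  have hne : ∑ g with ((g : G) : G ⧸ N) = x, V.character g * V.character g⁻¹ ≠ 0 := by
    rw [hsum]
    simp
  obtain ⟨g, hg, hVg⟩ := Finset.exists_ne_zero_of_sum_ne_zero hne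
  exact ⟨g, by simpa using hg, left_ne_zero_of_mul hVg⟩

end NormalSubgroup

theorem nonzero_on_coset_iff_stab_trivial_iff_res_irreducible_general
    {k G : Type u} [Field k] [IsAlgClosed k] [CharZero k] [Group G] [Finite G] {N : Subgroup G}
    [N.Normal] {q : G} (hgen : ∀ x : G ⧸ N, x ∈ Subgroup.zpowers (q : G ⧸ N))
    (V : FDRep k G) [Simple V] :
    ((∃ g : G, (g : G ⧸ N) = q ∧ V.character g ≠ 0) ↔ twistStabilizer N V.character = ⊥) ∧
    ((∃ g : G, (g : G ⧸ N) = q ∧ V.character g ≠ 0) ↔ Simple (restrict N V)) := by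
  have : IsCyclic (G ⧸ N) := ⟨q, hgen⟩
  rw [simple_restrict_iff_twistStabilizer_eq_bot, and_self]
  refine ⟨?_, fun h => exists_coset_character_ne_zero_of_twistStabilizer_eq_bot h q⟩
  rintro ⟨g, hgq, hg⟩
  exact twistStabilizer_eq_bot_of_apply_ne_zero (hgq ▸ hgen) hg

theorem isIrrChar_character_iff [Finite G] {V : FDRep ℂ G} :
    IsIrrChar G V.character ↔ Simple V := by
  have := Fintype.ofFinite G
  refine ⟨fun ⟨W, hW, hVW⟩ => ?_, fun hV => ⟨V, hV, rfl⟩⟩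
  rwa [FDRep.simple_iff_char_is_norm_one, hVW, ← FDRep.simple_iff_char_is_norm_one]

theorem isIrrChar_restrict_iff [Finite G] {N : Subgroup G} {V : FDRep ℂ G} :
    IsIrrChar N (fun n : N => V.character n) ↔ Simple (restrict N V) :=
  isIrrChar_character_iff (V := restrict N V)

theorem forall_charMul_eq_self_imp_eq_one_iff {N : Subgroup G} [N.Normal] {ρ : G → ℂ} :
    (∀ χ : (G ⧸ N) →* ℂˣ, charMul N χ ρ = ρ → χ = 1) ↔ twistStabilizer N ρ = ⊥ := by
  simp only [Subgroup.eq_bot_iff_forall, mem_twistStabilizer, funext_iff, charMul]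

/-- If `G ⧸ N` is cyclic generated by `qN`, then for irreducible `ρ`:
`ρ` not identically zero on `qN` ⟺ `Stab_{Q̂}(ρ)` is trivial ⟺ `Res_N ρ` is irreducible. -/
theorem nonzero_on_coset_iff_stab_trivial_iff_res_irreducible
    (G : Type) [Group G] [Fintype G] (N : Subgroup G) [N.Normal] (q : G)
    (hgen : ∀ x : G ⧸ N, x ∈ Subgroup.zpowers ((q : G ⧸ N)))
    (ρ : G → ℂ) (hρ : IsIrrChar G ρ) :
    ((∃ g ∈ coset N q, ρ g ≠ 0) ↔
        (∀ χ : (G ⧸ N) →* ℂˣ, charMul N χ ρ = ρ → χ = 1)) ∧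
    ((∃ g ∈ coset N q, ρ g ≠ 0) ↔ IsIrrChar ↥N (fun n : ↥N => ρ ↑n)) := by
  obtain ⟨V, hV, rfl⟩ := hρ
  rw [forall_charMul_eq_self_imp_eq_one_iff, isIrrChar_restrict_iff]
  exact nonzero_on_coset_iff_stab_trivial_iff_res_irreducible_general hgen V
end

section
/- Let G be a finite group and N a normal subgroup such that G/N is cyclic, generated by the coset of q ∈ G. Then the number of conjugacy classes of G contained in qN equals the number of Q̂-orbits on Irr G of length equal to the index (G:N). -/
open scoped BigOperators

variable {G : Type} [Group G]

/-!
The irreducible characters form a basis of the space of class functions, and multiplication by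
`π_q`, the indicator of `qN`, projects this space onto the class functions supported on `qN`, whose
dimension is the number of conjugacy classes in `qN`. By Fourier inversion on `Q`, the function
`π_q ρ` is a combination of the characters in the `Q̂`-orbit of `ρ`. Hence two characters in the
same orbit have proportional projections, while characters in different orbits, if non-zero on `qN`,
have linearly independent ones. So the orbits of characters that are non-zero on `qN` index a basis
of the image.

The coefficient of `ρ` in `π_q ρ` is proportional to the sum of `conj (χ q)` over the stabiliser of
`ρ`, so `ρ` is non-zero on `qN` exactly when `χ q = 1` for every `χ` in this stabiliser. When `q`
generates `Q` this says that the stabiliser is trivial, i.e. that the orbit has `(G : N)` elements.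
-/

section SemisimpleAlgebra

variable {k A : Type*} [Field k] [IsAlgClosed k] [CharZero k] [Ring A] [Algebra k A]

theorem smul_eq_zero_of_mem_center_of_trace_eq_zero {M : Type*} [AddCommGroup M] [Module k M]
    [Module A M] [IsScalarTower k A M] [IsSimpleModule A M] [FiniteDimensional k M] {a : A}
    (ha : a ∈ Subalgebra.center k A) (htr : LinearMap.trace k M (Algebra.lsmul k k M a) = 0)
    (x : M) : a • x = 0 := by
  let aEnd : Module.End A M :=
    { Algebra.lsmul k k M a with
      map_smul' := fun b y => by
        simp [smul_smul, Subalgebra.mem_center_iff.1 ha b] }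
  obtain ⟨c, hc⟩ := (IsSimpleModule.algebraMap_end_bijective_of_isAlgClosed k).2 aEnd
  have hscalar : Algebra.lsmul k k M a = c • LinearMap.id :=
    LinearMap.ext fun y => (LinearMap.congr_fun hc y).symm
  have hc0 : c = 0 := by
    have := IsSimpleModule.nontrivial A M
    simpa [hscalar, Module.finrank_pos.ne'] using htr
  simpa [hc0] using LinearMap.congr_fun hscalar x

theorem eq_zero_of_mem_center_of_forall_trace_eq_zero [FiniteDimensional k A] [IsSemisimpleRing A]
    {a : A} (ha : a ∈ Subalgebra.center k A)
    (htr : ∀ I : Ideal A, I.IsMaximal →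
      LinearMap.trace k (A ⧸ I) (Algebra.lsmul k k (A ⧸ I) a) = 0) :
    a = 0 := by
  have hmem : a ∈ Ring.jacobson A := by
    rw [Ring.jacobson_eq_sInf_isMaximal, Submodule.mem_sInf]
    intro I hI
    have : IsSimpleModule A (A ⧸ I) := isSimpleModule_iff_isCoatom.2 (Ideal.isMaximal_def.1 hI)
    have h1 := smul_eq_zero_of_mem_center_of_trace_eq_zero ha (htr I hI) (Submodule.Quotient.mk 1)
    rwa [← Submodule.Quotient.mk_smul, smul_eq_mul, mul_one, Submodule.Quotient.mk_eq_zero] at h1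
  rwa [IsSemisimpleRing.jacobson_eq_bot] at hmem

end SemisimpleAlgebra

theorem natCard_cast_ne_zero (R α : Type*) [NonAssocSemiring R] [CharZero R] [Finite α]
    [Nonempty α] : (Nat.card α : R) ≠ 0 :=
  Nat.cast_ne_zero.2 Nat.card_pos.ne'

section IrreducibleCharacters

/-- The bilinear form `(f, f') ↦ |G|⁻¹ ∑ g, f g * f' g⁻¹`. On characters it agrees with the usual
Hermitian inner product, since `χ g⁻¹` is the complex conjugate of `χ g`. -/
noncomputable def charPairing [Fintype G] : LinearMap.BilinForm ℂ (G → ℂ) :=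
  LinearMap.mk₂ ℂ (fun f f' => (Nat.card G : ℂ)⁻¹ * ∑ g, f g * f' g⁻¹)
    (fun f₁ f₂ f' => by simp only [Pi.add_apply, add_mul, Finset.sum_add_distrib, mul_add])
    (fun c f f' => by
      simp only [Pi.smul_apply, smul_eq_mul, mul_assoc, ← Finset.mul_sum]
      exact mul_left_comm _ _ _)
    (fun f f₁ f₂ => by simp only [Pi.add_apply, Finset.sum_add_distrib, mul_add])
    (fun c f f' => by
      simp only [Pi.smul_apply, smul_eq_mul, Finset.mul_sum, mul_left_comm c])

theorem charPairing_apply [Fintype G] (f f' : G → ℂ) :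
    charPairing f f' = (Nat.card G : ℂ)⁻¹ * ∑ g, f g * f' g⁻¹ := rfl

theorem IsIrrChar.mem_classFunSubmodule {ρ : G → ℂ} (hρ : IsIrrChar G ρ) :
    ρ ∈ classFunSubmodule G := by
  obtain ⟨V, -, rfl⟩ := hρ
  exact V.char_conj

theorem IsIrrChar.charPairing_self [Fintype G] {ρ : G → ℂ} (hρ : IsIrrChar G ρ) :
    charPairing ρ ρ = 1 := by
  obtain ⟨V, hV, rfl⟩ := hρ
  have := invertibleOfNonzero (natCard_cast_ne_zero ℂ G)
  rw [charPairing_apply, FDRep.char_orthonormal V V, if_pos ⟨CategoryTheory.Iso.refl V⟩]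

theorem IsIrrChar.charPairing_eq_zero [Fintype G] {ρ σ : G → ℂ} (hρ : IsIrrChar G ρ)
    (hσ : IsIrrChar G σ) (hne : ρ ≠ σ) : charPairing ρ σ = 0 := by
  obtain ⟨V, hV, rfl⟩ := hρ
  obtain ⟨W, hW, rfl⟩ := hσ
  have := invertibleOfNonzero (natCard_cast_ne_zero ℂ G)
  rw [charPairing_apply, FDRep.char_orthonormal V W, if_neg fun ⟨e⟩ => hne (FDRep.char_iso e)]

theorem isIrrChar_of_charPairing_self_eq_one [Fintype G] {V : Type} [AddCommGroup V] [Module ℂ V]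
    [FiniteDimensional ℂ V] (τ : Representation ℂ G V)
    (hτ : charPairing τ.character τ.character = 1) : IsIrrChar G τ.character := by
  refine ⟨FDRep.of τ, (FDRep.simple_iff_char_is_norm_one _).2 ?_, rfl⟩
  rw [charPairing_apply, inv_mul_eq_one₀ (natCard_cast_ne_zero ℂ G)] at hτ
  exact hτ.symm

theorem isIrrChar_character_of_isIrreducible [Finite G] {V : Type} [AddCommGroup V] [Module ℂ V]
    [FiniteDimensional ℂ V] (τ : Representation ℂ G V) [τ.IsIrreducible] :
    IsIrrChar G τ.character := by
  cases nonempty_fintype G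
  have := invertibleOfNonzero (natCard_cast_ne_zero ℂ G)
  refine isIrrChar_of_charPairing_self_eq_one τ ?_
  rw [charPairing_apply, Representation.char_orthonormal, if_pos ⟨.refl τ⟩]

theorem isIrrChar_trace_lsmul_of [Finite G] (M : Type) [AddCommGroup M] [Module ℂ M]
    [Module (MonoidAlgebra ℂ G) M] [IsScalarTower ℂ (MonoidAlgebra ℂ G) M]
    [IsSimpleModule (MonoidAlgebra ℂ G) M] [FiniteDimensional ℂ M] :
    IsIrrChar G fun g => LinearMap.trace ℂ M (Algebra.lsmul ℂ ℂ M (MonoidAlgebra.of ℂ G g)) := by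
  let τ : Representation ℂ G M := Representation.ofModule' M
  have hτ : τ.asAlgebraHom = Algebra.lsmul ℂ ℂ M := (MonoidAlgebra.lift ℂ _ G).apply_symm_apply _
  let e : τ.asModule ≃ₗ[MonoidAlgebra ℂ G] M :=
    { τ.asModuleEquiv with
      map_smul' := fun b x => (τ.asModuleEquiv_map_smul b x).trans (by rw [hτ]; rfl) }
  have : τ.IsIrreducible :=
    τ.irreducible_iff_isSimpleModule_asModule.2 (IsSimpleModule.congr e)
  exact isIrrChar_character_of_isIrreducible τ

theorem sum_smul_of_inv_mem_center [Fintype G] {f : G → ℂ} (hf : f ∈ classFunSubmodule G) :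
    ∑ g, f g • MonoidAlgebra.of ℂ G g⁻¹ ∈ Subalgebra.center ℂ (MonoidAlgebra ℂ G) := by
  rw [Subalgebra.mem_center_iff]
  intro b
  induction b using MonoidAlgebra.induction_on with
  | of x =>
    simp only [Finset.sum_mul, Finset.mul_sum, mul_smul_comm, smul_mul_assoc, ← map_mul]
    refine Fintype.sum_equiv (MulAut.conj x).toEquiv _ _ fun g => ?_
    simpa [mul_assoc] using (hf g x).symm
  | add x y hx hy => rw [mul_add, add_mul, hx, hy]
  | smul r x hx => rw [mul_smul_comm, smul_mul_assoc, hx]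

theorem eq_zero_of_forall_charPairing_eq_zero [Fintype G] {f : G → ℂ}
    (hf : f ∈ classFunSubmodule G) (h : ∀ ρ, IsIrrChar G ρ → charPairing f ρ = 0) : f = 0 := by
  have : NeZero (Nat.card G : ℂ) := ⟨natCard_cast_ne_zero ℂ G⟩
  have hsum : ∑ g, f g • MonoidAlgebra.of ℂ G g⁻¹ = 0 := by
    refine eq_zero_of_mem_center_of_forall_trace_eq_zero (sum_smul_of_inv_mem_center hf)
      fun I hI => ?_
    have : IsSimpleModule (MonoidAlgebra ℂ G) (MonoidAlgebra ℂ G ⧸ I) :=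
      isSimpleModule_iff_isCoatom.2 (Ideal.isMaximal_def.1 hI)
    have hI := h _ (isIrrChar_trace_lsmul_of (MonoidAlgebra ℂ G ⧸ I))
    rw [charPairing_apply, mul_eq_zero_iff_left (inv_ne_zero (natCard_cast_ne_zero ℂ G))] at hI
    -- Up to the factor `|G|⁻¹`, the pairing is the trace of `∑ g, f g • g⁻¹` on `ℂ[G] ⧸ I`.
    simpa only [map_sum, map_smul, smul_eq_mul] using hI
  have hli : LinearIndependent ℂ fun g : G => MonoidAlgebra.of ℂ G g⁻¹ := by
    have hbasis := (MonoidAlgebra.basis G ℂ).linearIndependent.comp _ (inv_injective (G := G))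
    simpa [Function.comp_def, MonoidAlgebra.of_apply] using hbasis
  exact funext (Fintype.linearIndependent_iff.1 hli f hsum)

theorem linearIndependent_isIrrChar [Finite G] :
    LinearIndependent ℂ ((↑) : {ρ : G → ℂ | IsIrrChar G ρ} → G → ℂ) := by
  cases nonempty_fintype G
  exact .of_pairwise_dual_eq_zero_one _ (fun ρ => charPairing ρ)
    (fun ρ σ hne => ρ.2.charPairing_eq_zero σ.2 (Subtype.coe_ne_coe.2 hne))
    fun ρ => ρ.2.charPairing_self

theorem span_isIrrChar [Finite G] :
    Submodule.span ℂ {ρ : G → ℂ | IsIrrChar G ρ} = classFunSubmodule G := by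
  cases nonempty_fintype G
  have hirr : {ρ : G → ℂ | IsIrrChar G ρ} ⊆ classFunSubmodule G :=
    fun _ hρ => hρ.mem_classFunSubmodule
  refine le_antisymm (Submodule.span_le.2 hirr) fun f hf => ?_
  have hfin : {ρ : G → ℂ | IsIrrChar G ρ}.Finite := linearIndependent_isIrrChar.setFinite
  let p : G → ℂ := ∑ ρ ∈ hfin.toFinset, charPairing f ρ • ρ
  have hp : p ∈ Submodule.span ℂ {ρ : G → ℂ | IsIrrChar G ρ} :=
    Submodule.sum_mem _ fun ρ hρ =>
      Submodule.smul_mem _ _ (Submodule.subset_span (hfin.mem_toFinset.1 hρ))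
  have hfp : f - p = 0 := by
    refine eq_zero_of_forall_charPairing_eq_zero
      (Submodule.sub_mem _ hf (Submodule.span_le.2 hirr hp)) fun σ hσ => ?_
    have hpσ : charPairing p σ = charPairing f σ := by
      rw [map_sum, LinearMap.sum_apply, Finset.sum_eq_single_of_mem σ (hfin.mem_toFinset.2 hσ)]
      · simp [hσ.charPairing_self]
      · intro ρ hρ hne
        simp [IsIrrChar.charPairing_eq_zero (hfin.mem_toFinset.1 hρ) hσ hne]
    rw [map_sub, LinearMap.sub_apply, hpσ, sub_self]
  rwa [sub_eq_zero.1 hfp]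

end IrreducibleCharacters

section Twist

/-- The tensor product of `τ` with the one-dimensional representation `χ`, realised on the space
of `τ`. -/
def twist {k H V : Type*} [CommSemiring k] [Monoid H] [AddCommMonoid V] [Module k V] (χ : H →* k)
    (τ : Representation k H V) : Representation k H V where
  toFun h := χ h • τ h
  map_one' := by rw [map_one, map_one, one_smul]
  map_mul' g h := by rw [map_mul, map_mul, smul_mul_smul_comm]

theorem character_twist {k H V : Type*} [Field k] [Monoid H] [AddCommGroup V] [Module k V]
    (χ : H →* k) (τ : Representation k H V) :
    (twist χ τ).character = fun h => χ h * τ.character h :=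
  funext fun h => map_smul (LinearMap.trace k V) (χ h) (τ h)

variable (N : Subgroup G) [N.Normal]

theorem charPairing_charMul [Fintype G] (χ : (G ⧸ N) →* ℂˣ) (f f' : G → ℂ) :
    charPairing (charMul N χ f) (charMul N χ f') = charPairing f f' := by
  have hcancel (g : G) : charMul N χ f g * charMul N χ f' g⁻¹ = f g * f' g⁻¹ := by
    rw [charMul, charMul, mul_mul_mul_comm, QuotientGroup.mk_inv, map_inv, Units.mul_inv, one_mul]
  simp only [charPairing_apply, hcancel]

theorem isIrrChar_charMul [Finite G] (χ : (G ⧸ N) →* ℂˣ) {ρ : G → ℂ} (hρ : IsIrrChar G ρ) :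
    IsIrrChar G (charMul N χ ρ) := by
  cases nonempty_fintype G
  have hnorm := (charPairing_charMul N χ ρ ρ).trans hρ.charPairing_self
  obtain ⟨V, -, rfl⟩ := hρ
  let χG : G →* ℂ := (Units.coeHom ℂ).comp (χ.comp (QuotientGroup.mk' N))
  have htwist : (twist χG V.ρ).character = charMul N χ V.character := character_twist χG V.ρ
  rw [← htwist] at hnorm ⊢
  exact isIrrChar_of_charPairing_self_eq_one _ hnorm

/-- The action of `Q̂` on functions by `charMul`, whose orbits are the sets `qhatOrbit N ρ`. -/
instance charMulAction : MulAction ((G ⧸ N) →* ℂˣ) (G → ℂ) where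
  smul := charMul N
  one_smul _ := funext fun _ => one_mul _
  mul_smul χ ψ ρ := funext fun g => mul_assoc (χ g : ℂ) (ψ g) (ρ g)

theorem qhatOrbit_eq_orbit (ρ : G → ℂ) :
    qhatOrbit N ρ = MulAction.orbit ((G ⧸ N) →* ℂˣ) ρ :=
  Set.ext fun _ => exists_congr fun _ => eq_comm

theorem mem_qhatOrbit_self (ρ : G → ℂ) : ρ ∈ qhatOrbit N ρ :=
  ⟨1, (one_smul ((G ⧸ N) →* ℂˣ) ρ).symm⟩

theorem mem_Rset_iff {q : G} {S : Set (G → ℂ)} :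
    S ∈ Rset N q ↔
      ∃ ρ, IsIrrChar G ρ ∧ (∃ g ∈ coset N q, ρ g ≠ 0) ∧ S = qhatOrbit N ρ := by
  constructor
  · rintro ⟨⟨ρ, hρ, rfl⟩, _, ⟨χ, rfl⟩, g, hg, hne⟩
    exact ⟨ρ, hρ, ⟨g, hg, right_ne_zero_of_mul hne⟩, rfl⟩
  · rintro ⟨ρ, hρ, hne, rfl⟩
    exact ⟨⟨ρ, hρ, rfl⟩, ρ, mem_qhatOrbit_self N ρ, hne⟩

open scoped IsMulCommutative in
theorem ncard_qhatOrbit_eq_index_iff [IsMulCommutative (G ⧸ N)] [Finite (G ⧸ N)]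
    (ρ : G → ℂ) :
    (qhatOrbit N ρ).ncard = N.index ↔ ∀ χ : (G ⧸ N) →* ℂˣ, charMul N χ ρ = ρ → χ = 1 := by
  have hcard : Nat.card ((G ⧸ N) →* ℂˣ) = N.index :=
    CommGroup.card_monoidHom_of_hasEnoughRootsOfUnity (G ⧸ N) ℂ
  let stab := MulAction.stabilizer ((G ⧸ N) →* ℂˣ) ρ
  rw [qhatOrbit_eq_orbit, ← MulAction.index_stabilizer, ← hcard, ← stab.card_mul_index,
    right_eq_mul₀ stab.index_ne_zero_of_finite, ← Subgroup.eq_bot_iff_card,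
    Subgroup.eq_bot_iff_forall]
  rfl

end Twist

section CharacterDuality

theorem sum_monoidHom_apply_eq_zero {Q R : Type*} [CommGroup Q] [Finite Q] [CommRing R]
    [IsDomain R] [HasEnoughRootsOfUnity R (Monoid.exponent Q)] [Fintype (Q →* Rˣ)] {x : Q}
    (hx : x ≠ 1) : ∑ χ : Q →* Rˣ, (χ x : R) = 0 := by
  obtain ⟨ψ, hψ⟩ := CommGroup.exists_apply_ne_one_of_hasEnoughRootsOfUnity Q R hx
  refine eq_zero_of_mul_eq_self_left (Units.val_eq_one.not.2 hψ) ?_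
  simp only [Finset.mul_sum, ← Units.val_mul, ← MonoidHom.mul_apply]
  exact Fintype.sum_bijective _ (Group.mulLeft_bijective ψ) _ _ fun _ => rfl

theorem conj_monoidHom_apply {Q : Type*} [Group Q] [Finite Q] (χ : Q →* ℂˣ) (x : Q) :
    starRingEnd ℂ (χ x : ℂ) = χ x⁻¹ := by
  have hpow : (χ x : ℂ) ^ Nat.card Q = 1 := by
    rw [← Units.val_pow_eq_pow_val, ← map_pow, pow_card_eq_one', map_one, Units.val_one]
  rw [← Complex.inv_eq_conj (Complex.norm_eq_one_of_pow_eq_one hpow Nat.card_pos.ne'), map_inv,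
    Units.val_inv_eq_inv_val]

end CharacterDuality

section CosetProjection

open scoped IsMulCommutative

theorem mem_classFunSubmodule_iff {f : G → ℂ} :
    f ∈ classFunSubmodule G ↔ ∃ F : ConjClasses G → ℂ, F ∘ ConjClasses.mk = f := by
  constructor
  · refine fun hf => ⟨Quotient.lift f fun g g' hgg' => ?_, rfl⟩
    obtain ⟨h, rfl⟩ := isConj_iff.1 hgg'
    exact (hf g h).symm
  · rintro ⟨F, rfl⟩ g h
    exact congrArg F (ConjClasses.mk_eq_mk_iff_isConj.2 (isConj_iff.2 ⟨h, rfl⟩)).symm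

variable {N : Subgroup G} [N.Normal]

theorem mem_coset_iff {q g : G} :
    g ∈ coset N q ↔ (g : G ⧸ N) = q := Iff.rfl

variable (N)

theorem piQ_mul_eq_smul_sum [Fintype ((G ⧸ N) →* ℂˣ)] (x : G ⧸ N) (f : G → ℂ) :
    piQ N x * f = (Nat.card ((G ⧸ N) →* ℂˣ) : ℂ)⁻¹ •
      ∑ χ : (G ⧸ N) →* ℂˣ, starRingEnd ℂ (χ x : ℂ) • charMul N χ f := by
  funext g
  simp [piQ, charMul, finsum_eq_sum_of_fintype, Finset.sum_mul, mul_assoc]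

variable [IsMulCommutative (G ⧸ N)] (q : G)

theorem conj_mem_coset_iff (g h : G) : h * g * h⁻¹ ∈ coset N q ↔ g ∈ coset N q := by
  simp only [mem_coset_iff, QuotientGroup.mk_mul, QuotientGroup.mk_inv, mul_inv_cancel_comm]

theorem mk_mem_Cset_iff (g : G) : ConjClasses.mk g ∈ Cset N q ↔ g ∈ coset N q := by
  refine ⟨fun h => h ConjClasses.mem_carrier_mk, fun hg g' hg' => ?_⟩
  have hconj := ConjClasses.mk_eq_mk_iff_isConj.1 (ConjClasses.mem_carrier_iff_mk_eq.1 hg')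
  obtain ⟨h, rfl⟩ := isConj_iff.1 hconj.symm
  exact (conj_mem_coset_iff N q g h).2 hg

theorem finrank_cosetClassFun [Finite G] :
    Module.finrank ℂ (cosetClassFun N q) = (Cset N q).ncard := by
  let e : (Cset N q → ℂ) →ₗ[ℂ] G → ℂ :=
    LinearMap.funLeft ℂ ℂ ConjClasses.mk ∘ₗ
      Function.ExtendByZero.linearMap ℂ ((↑) : Cset N q → ConjClasses G)
  have he : Function.Injective e :=
    (LinearMap.funLeft_injective_of_surjective ℂ ℂ _ ConjClasses.mk_surjective).comp
      (Function.extend_injective Subtype.val_injective (0 : ConjClasses G → ℂ))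
  have he_notMem (F : Cset N q → ℂ) (g : G) (hg : g ∉ coset N q) : e F g = 0 := by
    refine Function.extend_apply' F (0 : ConjClasses G → ℂ) _ ?_
    rintro ⟨c, hc⟩
    exact hg ((mk_mem_Cset_iff N q g).1 (hc ▸ c.2))
  have hrange : e.range = cosetClassFun N q := by
    apply le_antisymm
    · rintro _ ⟨F, rfl⟩
      exact ⟨mem_classFunSubmodule_iff.2 ⟨Function.extend Subtype.val F 0, rfl⟩, he_notMem F⟩
    · intro f hf
      obtain ⟨F, rfl⟩ := mem_classFunSubmodule_iff.1 hf.1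
      refine ⟨fun c => F c, funext fun g => ?_⟩
      by_cases hg : g ∈ coset N q
      · exact Subtype.val_injective.extend_apply (fun c : Cset N q => F c) (0 : ConjClasses G → ℂ)
          ⟨_, (mk_mem_Cset_iff N q g).2 hg⟩
      · rw [he_notMem _ g hg, hf.2 g hg]
  have := Fintype.ofFinite (Cset N q)
  rw [← hrange, LinearMap.finrank_range_of_inj he, Module.finrank_fintype_fun_eq_card,
    ← Nat.card_eq_fintype_card]
  rfl

variable [Finite (G ⧸ N)]

theorem piQ_eq_indicator : piQ N (q : G ⧸ N) = (coset N q).indicator 1 := by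
  have := Fintype.ofFinite ((G ⧸ N) →* ℂˣ)
  funext g
  simp only [piQ, finsum_eq_sum_of_fintype, conj_monoidHom_apply, ← Units.val_mul, ← map_mul]
  by_cases hg : g ∈ coset N q
  · rw [Set.indicator_of_mem hg, mem_coset_iff.1 hg]
    simp
  · have hne : (q : G ⧸ N)⁻¹ * g ≠ 1 := fun h => hg (inv_mul_eq_one.1 h).symm
    rw [Set.indicator_of_notMem hg, sum_monoidHom_apply_eq_zero hne, mul_zero]

theorem piQ_mul_eq_indicator (f : G → ℂ) : piQ N (q : G ⧸ N) * f = (coset N q).indicator f := by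
  rw [piQ_eq_indicator]
  exact funext fun g => by simp [← Set.indicator_mul_left]

theorem piQ_mul_ne_zero_iff (f : G → ℂ) :
    piQ N (q : G ⧸ N) * f ≠ 0 ↔ ∃ g ∈ coset N q, f g ≠ 0 := by
  simp [piQ_mul_eq_indicator, funext_iff]

theorem piQ_mul_charMul (χ : (G ⧸ N) →* ℂˣ) (f : G → ℂ) :
    piQ N (q : G ⧸ N) * charMul N χ f = (χ q : ℂ) • (piQ N (q : G ⧸ N) * f) := by
  funext g
  by_cases hg : g ∈ coset N q
  · simp [piQ_eq_indicator, charMul, hg, mem_coset_iff.1 hg]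
  · simp [piQ_eq_indicator, hg]

theorem map_mulLeft_piQ_classFunSubmodule :
    (classFunSubmodule G).map (LinearMap.mulLeft ℂ (piQ N (q : G ⧸ N))) = cosetClassFun N q := by
  apply le_antisymm
  · rintro _ ⟨f, hf, rfl⟩
    rw [LinearMap.mulLeft_apply, piQ_mul_eq_indicator]
    refine ⟨fun g h => ?_, fun g hg => Set.indicator_of_notMem hg f⟩
    classical simp only [Set.indicator_apply, conj_mem_coset_iff, hf g h]
  · intro f hf
    refine ⟨f, hf.1, ?_⟩
    rw [LinearMap.mulLeft_apply, piQ_mul_eq_indicator, Set.indicator_eq_self]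
    exact fun g hg => by_contra fun hgq => hg (hf.2 g hgq)

end CosetProjection

section CosetBasis

open scoped IsMulCommutative

variable (N : Subgroup G) [N.Normal] [IsMulCommutative (G ⧸ N)]

theorem charPairing_piQ_mul_eq_zero [Fintype G] {ρ σ : G → ℂ} (hρ : IsIrrChar G ρ)
    (hσ : IsIrrChar G σ) (hσρ : σ ∉ qhatOrbit N ρ) (x : G ⧸ N) :
    charPairing (piQ N x * ρ) σ = 0 := by
  have := Fintype.ofFinite ((G ⧸ N) →* ℂˣ)
  have hterm (χ : (G ⧸ N) →* ℂˣ) : charPairing (charMul N χ ρ) σ = 0 :=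
    (isIrrChar_charMul N χ hρ).charPairing_eq_zero hσ fun h => hσρ ⟨χ, h.symm⟩
  simp [piQ_mul_eq_smul_sum, LinearMap.sum_apply, hterm]

theorem charPairing_piQ_mul_self_ne_zero [Fintype G] {ρ : G → ℂ} (hρ : IsIrrChar G ρ) {x : G ⧸ N}
    (hx : ∀ χ : (G ⧸ N) →* ℂˣ, charMul N χ ρ = ρ → χ x = 1) :
    charPairing (piQ N x * ρ) ρ ≠ 0 := by
  classical
  have := Fintype.ofFinite ((G ⧸ N) →* ℂˣ)
  have hterm (χ : (G ⧸ N) →* ℂˣ) :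
      starRingEnd ℂ (χ x : ℂ) * charPairing (charMul N χ ρ) ρ =
        if charMul N χ ρ = ρ then 1 else 0 := by
    split_ifs with hχ
    · rw [hχ, hρ.charPairing_self, hx χ hχ, Units.val_one, map_one, mul_one]
    · rw [(isIrrChar_charMul N χ hρ).charPairing_eq_zero hρ hχ, mul_zero]
  have hone : charMul N 1 ρ = ρ := one_smul ((G ⧸ N) →* ℂˣ) ρ
  have hsum : charPairing (piQ N x * ρ) ρ = (Nat.card ((G ⧸ N) →* ℂˣ) : ℂ)⁻¹ *
      ({χ : (G ⧸ N) →* ℂˣ | charMul N χ ρ = ρ} : Finset _).card := by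
    simp [piQ_mul_eq_smul_sum, LinearMap.sum_apply, hterm]
  rw [hsum]
  refine mul_ne_zero (inv_ne_zero (natCard_cast_ne_zero ℂ _)) (Nat.cast_ne_zero.2 ?_)
  exact Finset.card_ne_zero_of_mem (Finset.mem_filter.2 ⟨Finset.mem_univ 1, hone⟩)

variable [Finite G]

theorem IsIrrChar.exists_mem_coset_ne_zero_iff (q : G) {ρ : G → ℂ} (hρ : IsIrrChar G ρ) :
    (∃ g ∈ coset N q, ρ g ≠ 0) ↔ ∀ χ : (G ⧸ N) →* ℂˣ, charMul N χ ρ = ρ → χ q = 1 := by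
  cases nonempty_fintype G
  constructor
  · rintro ⟨g, hg, hne⟩ χ hχ
    rw [← mem_coset_iff.1 hg, ← Units.val_eq_one]
    exact (mul_eq_right₀ hne).1 (congrFun hχ g)
  · intro hχ
    refine (piQ_mul_ne_zero_iff N q ρ).1 fun h => ?_
    exact charPairing_piQ_mul_self_ne_zero N hρ hχ (by rw [h, map_zero, LinearMap.zero_apply])

variable {N} {q : G} {ι : Type*} {r : ι → G → ℂ}

theorem linearIndependent_piQ_mul (hr : ∀ i, IsIrrChar G (r i))
    (hne : ∀ i, ∃ g ∈ coset N q, r i g ≠ 0)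
    (horbit : Pairwise fun i j => r j ∉ qhatOrbit N (r i)) :
    LinearIndependent ℂ fun i => piQ N (q : G ⧸ N) * r i := by
  cases nonempty_fintype G
  have hself (i : ι) : charPairing (piQ N (q : G ⧸ N) * r i) (r i) ≠ 0 :=
    charPairing_piQ_mul_self_ne_zero N (hr i) (((hr i).exists_mem_coset_ne_zero_iff N q).1 (hne i))
  refine .of_pairwise_dual_eq_zero_one _
    (fun i => (charPairing (piQ N (q : G ⧸ N) * r i) (r i))⁻¹ • charPairing.flip (r i))
    (fun i j hij => ?_) fun i => ?_
  · simp [charPairing_piQ_mul_eq_zero N (hr j) (hr i) (horbit hij.symm)]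
  · simp [hself i]

theorem span_piQ_mul (hr : ∀ i, IsIrrChar G (r i))
    (hcover : ∀ ρ, IsIrrChar G ρ → (∃ g ∈ coset N q, ρ g ≠ 0) → ∃ i, ρ ∈ qhatOrbit N (r i)) :
    Submodule.span ℂ (Set.range fun i => piQ N (q : G ⧸ N) * r i) = cosetClassFun N q := by
  rw [← map_mulLeft_piQ_classFunSubmodule, ← span_isIrrChar, Submodule.map_span]
  refine le_antisymm (Submodule.span_mono ?_) (Submodule.span_le.2 ?_)
  · rintro _ ⟨i, rfl⟩
    exact ⟨r i, hr i, rfl⟩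
  · rintro _ ⟨ρ, hρ, rfl⟩
    by_cases hne : ∃ g ∈ coset N q, ρ g ≠ 0
    · obtain ⟨i, χ, rfl⟩ := hcover ρ hρ hne
      rw [LinearMap.mulLeft_apply, piQ_mul_charMul]
      exact Submodule.smul_mem _ _ (Submodule.subset_span ⟨i, rfl⟩)
    · rw [LinearMap.mulLeft_apply, not_ne_iff.1 ((piQ_mul_ne_zero_iff N q ρ).not.2 hne)]
      exact Submodule.zero_mem _

variable (N)

theorem ncard_Cset_eq_ncard_Rset (q : G) : (Cset N q).ncard = (Rset N q).ncard := by
  have hrep (S : Rset N q) := (mem_Rset_iff N).1 S.2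
  choose r hr hne hS using hrep
  have hli : LinearIndependent ℂ fun S => piQ N (q : G ⧸ N) * r S := by
    refine linearIndependent_piQ_mul hr hne fun S T hST hT => hST (Subtype.ext ?_)
    rw [qhatOrbit_eq_orbit, ← MulAction.orbit_eq_iff] at hT
    rw [hS S, hS T, qhatOrbit_eq_orbit, qhatOrbit_eq_orbit, hT]
  have hspan : Submodule.span ℂ (Set.range fun S => piQ N (q : G ⧸ N) * r S) =
      cosetClassFun N q := by
    refine span_piQ_mul hr fun ρ hρ hρq => ?_
    have hmem : qhatOrbit N ρ ∈ Rset N q := (mem_Rset_iff N).2 ⟨ρ, hρ, hρq, rfl⟩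
    refine ⟨⟨_, hmem⟩, ?_⟩
    rw [← hS ⟨_, hmem⟩]
    exact mem_qhatOrbit_self N ρ
  have := hli.finite
  have := Fintype.ofFinite (Rset N q)
  rw [← finrank_cosetClassFun, ← hspan, finrank_span_eq_card hli, ← Nat.card_eq_fintype_card]
  rfl

theorem Rset_eq_setOf_ncard_eq_index {q : G}
    (hgen : ∀ x : G ⧸ N, x ∈ Subgroup.zpowers (q : G ⧸ N)) :
    Rset N q = {S | (∃ ρ, IsIrrChar G ρ ∧ S = qhatOrbit N ρ) ∧ S.ncard = N.index} := by
  have hone_iff (χ : (G ⧸ N) →* ℂˣ) := MonoidHom.eq_iff_eq_on_generator hgen χ 1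
  have hfull {ρ : G → ℂ} (hρ : IsIrrChar G ρ) :
      (∃ g ∈ coset N q, ρ g ≠ 0) ↔ (qhatOrbit N ρ).ncard = N.index := by
    simp only [hρ.exists_mem_coset_ne_zero_iff N, ncard_qhatOrbit_eq_index_iff, hone_iff,
      MonoidHom.one_apply]
  ext S
  rw [mem_Rset_iff]
  constructor
  · rintro ⟨ρ, hρ, hne, rfl⟩
    exact ⟨⟨ρ, hρ, rfl⟩, (hfull hρ).1 hne⟩
  · rintro ⟨⟨ρ, hρ, rfl⟩, hcard⟩
    exact ⟨ρ, hρ, (hfull hρ).2 hcard, rfl⟩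

end CosetBasis

/-- If `G ⧸ N` is cyclic generated by `qN`, the number of conjugacy
classes of `G` in `qN` equals the number of `Q̂`-orbits on `Irr G` of length `(G:N)`. -/
theorem conjClasses_coset_card_eq_full_orbits_card
    (G : Type) [Group G] [Fintype G] (N : Subgroup G) [N.Normal] (q : G)
    (hgen : ∀ x : G ⧸ N, x ∈ Subgroup.zpowers ((q : G ⧸ N))) :
    (Cset N q).ncard =
      {S : Set (G → ℂ) | (∃ ρ, IsIrrChar G ρ ∧ S = qhatOrbit N ρ) ∧
        S.ncard = N.index}.ncard := by
  have : IsCyclic (G ⧸ N) := ⟨q, hgen⟩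
  rw [ncard_Cset_eq_ncard_Rset, Rset_eq_setOf_ncard_eq_index N hgen]
end
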